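/- arXiv:2510.17435 — 2 statements merged into one kernel-verified Lean document; each statement's English description precedes it below -/
import Mathlib

section
/- For every instance of 5 agents on the unit circle, the expected social cost of the PCD mechanism is at most (7 − 4√2) times the optimal social cost: PCD ≤ (7 − 4√2) · OPT. -/
open Finset

/-- Position of agent `i` on the unit circle: the image of the partial sum
`∑_{j < i} d j`, so that `d i` is the clockwise arc from agent `i` to agent `i+1`. -/
noncomputable def pos (d : Fin 5 → ℝ) (i : Fin 5) : AddCircle (1 : ℝ) :=
  ((∑ j ∈ Finset.Iio i, d j : ℝ) : AddCircle (1 : ℝ))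

/-- Social cost of placing the facility at `a`. -/
noncomputable def SC (d : Fin 5 → ℝ) (a : AddCircle (1 : ℝ)) : ℝ :=
  ∑ i : Fin 5, dist (pos d i) a

/-- Social cost of placing the facility at agent `i`'s location. -/
noncomputable def C (d : Fin 5 → ℝ) (i : Fin 5) : ℝ := SC d (pos d i)

/-- The optimal social cost. -/
noncomputable def OPT (d : Fin 5 → ℝ) : ℝ := ⨅ a : AddCircle (1 : ℝ), SC d a

/-- The length of the arc facing agent `i` (indices mod 5). -/
noncomputable def P (d : Fin 5 → ℝ) (i : Fin 5) : ℝ := d (i + 2)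

/-- Expected social cost of the PCD mechanism. -/
noncomputable def PCD (d : Fin 5 → ℝ) : ℝ := ∑ i : Fin 5, P d i * C d i

/-!
On a circle, as on a line, moving the facility to the nearest agent on the side holding at least
half of the agents does not increase the social cost, so some agent is an optimal location. If its
second neighbour on one side is more than half a circle away in that direction, then one of the two
next agents on the other side is a median of no larger cost. A median agent with surrounding gaps
`u, p, m, q, v` has cost `1 - m + u + v`, and what remains is a quadratic inequality in the gaps.
It splits according to whether `m`, `p + m` and `m + q` exceed half a circle, and the constant
comes from the extremal instance `p = v = 0`, `q = √2 u`, `m = 1 / 2`.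
-/

lemma norm_coe_addCircle_eq_min {p x : ℝ} (hx₀ : 0 ≤ x) (hxp : x ≤ p) :
    ‖(x : AddCircle p)‖ = min x (p - x) := by
  rcases (hx₀.trans hxp).eq_or_lt with rfl | hp
  · simp [le_antisymm hxp hx₀]
  have norm_eq_self {y : ℝ} (hy₀ : 0 ≤ y) (hy : y ≤ p / 2) : ‖(y : AddCircle p)‖ = y := by
    rw [(AddCircle.norm_coe_eq_abs_iff p hp.ne').2, abs_of_nonneg hy₀]
    rwa [abs_of_nonneg hy₀, abs_of_pos hp]
  rcases le_total x (p / 2) with h | h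
  · rw [norm_eq_self hx₀ h, min_eq_left (by linarith)]
  · have hcoe : (x : AddCircle p) = -((p - x : ℝ) : AddCircle p) := by
      rw [AddCircle.coe_sub, AddCircle.coe_period, zero_sub, neg_neg]
    rw [hcoe, norm_neg, norm_eq_self (by linarith) (by linarith), min_eq_right (by linarith)]

lemma dist_coe_addCircle_le {p : ℝ} (x y : ℝ) :
    dist (x : AddCircle p) (y : AddCircle p) ≤ |x - y| := by
  rw [dist_eq_norm, ← AddCircle.coe_sub, ← Real.norm_eq_abs]
  exact QuotientAddGroup.norm_mk_le_norm

lemma exists_addCircle_lift_abs_sub_eq_dist {p : ℝ} (x : AddCircle p) (c : ℝ) :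
    ∃ y : ℝ, (y : AddCircle p) = x ∧ |y - c| = dist x c := by
  obtain ⟨z, rfl⟩ := QuotientAddGroup.mk_surjective x
  refine ⟨z - round (p⁻¹ * (z - c)) * p, ?_, ?_⟩
  · rw [AddCircle.coe_sub, ← zsmul_eq_mul, AddCircle.coe_zsmul, AddCircle.coe_period, smul_zero,
      sub_zero]
  · rw [sub_right_comm, ← AddCircle.norm_eq, AddCircle.coe_sub, dist_eq_norm]

section Median

variable {ι : Type*} [Fintype ι] [Nonempty ι]

lemma exists_sum_abs_sub_le_of_card_lt_le_card_ge (y : ι → ℝ) {c : ℝ}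
    (hcard : #{i | y i < c} ≤ #{i | c ≤ y i}) :
    ∃ k, ∑ i, |y i - y k| ≤ ∑ i, |y i - c| := by
  have hne : ({i | c ≤ y i} : Finset ι).Nonempty := by
    by_contra! h
    rw [h, card_empty, Nat.le_zero, card_eq_zero] at hcard
    obtain ⟨i⟩ := ‹Nonempty ι›
    rcases le_or_gt c (y i) with hi | hi
    · exact notMem_empty i (h ▸ mem_filter.2 ⟨mem_univ i, hi⟩)
    · exact notMem_empty i (hcard ▸ mem_filter.2 ⟨mem_univ i, hi⟩)
  obtain ⟨k, hk, hmin⟩ := exists_min_image _ y hne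
  have hck : 0 ≤ y k - c := sub_nonneg.2 (mem_filter.1 hk).2
  have habs (i : ι) :
      |y i - y k| ≤ |y i - c| + if c ≤ y i then -(y k - c) else y k - c := by
    split_ifs with hi
    · have := hmin i (by simpa using hi)
      rw [abs_of_nonneg (by linarith), abs_of_nonneg (by linarith)]
      linarith
    · rw [abs_of_nonpos (by linarith), abs_of_nonpos (by linarith)]
      linarith
  refine ⟨k, (sum_le_sum fun i _ => habs i).trans ?_⟩
  rw [sum_add_distrib, sum_ite, sum_const, sum_const, nsmul_eq_mul, nsmul_eq_mul]
  simp only [not_le]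
  have hcard' : (#{i | y i < c} : ℝ) ≤ #{i | c ≤ y i} := mod_cast hcard
  linarith [mul_le_mul_of_nonneg_right hcard' hck]

lemma exists_sum_abs_sub_le (y : ι → ℝ) (c : ℝ) :
    ∃ k, ∑ i, |y i - y k| ≤ ∑ i, |y i - c| := by
  rcases le_total (#{i | y i < c}) (#{i | c ≤ y i}) with h | h
  · exact exists_sum_abs_sub_le_of_card_lt_le_card_ge y h
  · have hneg : #{i | -y i < -c} ≤ #{i | -c ≤ -y i} := by
      simp only [neg_lt_neg_iff, neg_le_neg_iff]
      calc #{i | c < y i} ≤ #{i | c ≤ y i} := by gcongr with i; exact le_of_lt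
        _ ≤ #{i | y i < c} := h
        _ ≤ #{i | y i ≤ c} := by gcongr with i; exact le_of_lt
    obtain ⟨k, hk⟩ := exists_sum_abs_sub_le_of_card_lt_le_card_ge (fun i => -y i) hneg
    refine ⟨k, ?_⟩
    simpa only [neg_sub_neg, abs_sub_comm] using hk

lemma exists_sum_dist_le {p : ℝ} (x : ι → AddCircle p) (a : AddCircle p) :
    ∃ k, ∑ i, dist (x i) (x k) ≤ ∑ i, dist (x i) a := by
  obtain ⟨c, rfl⟩ := QuotientAddGroup.mk_surjective a
  choose y hy hdist using fun i => exists_addCircle_lift_abs_sub_eq_dist (x i) c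
  obtain ⟨k, hk⟩ := exists_sum_abs_sub_le y c
  refine ⟨k, ?_⟩
  calc ∑ i, dist (x i) (x k) ≤ ∑ i, |y i - y k| :=
        sum_le_sum fun i _ => by rw [← hy i, ← hy k]; exact dist_coe_addCircle_le _ _
    _ ≤ ∑ i, |y i - c| := hk
    _ = ∑ i, dist (x i) c := sum_congr rfl fun i _ => hdist i

end Median

lemma exists_C_le_OPT (d : Fin 5 → ℝ) : ∃ k, C d k ≤ OPT d := by
  obtain ⟨k, hk⟩ := Finite.exists_min (C d)
  refine ⟨k, le_ciInf fun a => ?_⟩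
  obtain ⟨j, hj⟩ := exists_sum_dist_le (pos d) a
  exact (hk j).trans hj

lemma pos_add_one {d : Fin 5 → ℝ} (hsum : ∑ i, d i = 1) (i : Fin 5) :
    pos d (i + 1) = pos d i + (d i : AddCircle (1 : ℝ)) := by
  unfold pos
  rw [← AddCircle.coe_add, add_comm (∑ j ∈ _, _), ← sum_insert (by simp)]
  cases i using Fin.lastCases with
  | last =>
    have hzero : Iio (Fin.last 4 + 1) = ∅ := by decide
    have huniv : insert (Fin.last 4) (Iio (Fin.last 4)) = univ := by decide
    rw [hzero, huniv, hsum, sum_empty, AddCircle.coe_period, AddCircle.coe_zero]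
  | cast i =>
    have hinsert : Iio (i.castSucc + 1) = insert i.castSucc (Iio i.castSucc) := by
      decide +revert
    rw [hinsert]

section StdSimplex

variable {d : Fin 5 → ℝ} (hd : d ∈ stdSimplex ℝ (Fin 5))
include hd

lemma sum_gaps_eq_one : d 0 + d 1 + d 2 + d 3 + d 4 = 1 := by
  rw [← Fin.sum_univ_five, hd.2]

lemma gap_add_gap_le_one (i : Fin 5) : d i + d (i + 1) ≤ 1 := by
  rw [← hd.2]
  exact add_le_sum (fun j _ => hd.1 j) (mem_univ _) (mem_univ _) (by decide +revert)

lemma dist_pos_add_one (i : Fin 5) :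
    dist (pos d i) (pos d (i + 1)) = min (d i) (1 - d i) := by
  rw [pos_add_one hd.2, dist_self_add_right]
  exact norm_coe_addCircle_eq_min (hd.1 i) (by linarith [gap_add_gap_le_one hd i, hd.1 (i + 1)])

lemma dist_pos_add_two (i : Fin 5) :
    dist (pos d i) (pos d (i + 2)) = min (d i + d (i + 1)) (1 - (d i + d (i + 1))) := by
  have hi : i + 2 = i + 1 + 1 := by decide +revert
  rw [hi, pos_add_one hd.2, pos_add_one hd.2, add_assoc, dist_self_add_right, ← AddCircle.coe_add]
  exact norm_coe_addCircle_eq_min (add_nonneg (hd.1 i) (hd.1 (i + 1))) (gap_add_gap_le_one hd i)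

lemma C_eq (i : Fin 5) :
    C d i = min (d i) (1 - d i) + min (d i + d (i + 1)) (1 - (d i + d (i + 1))) +
      min (d (i + 3) + d (i + 4)) (1 - (d (i + 3) + d (i + 4))) +
      min (d (i + 4)) (1 - d (i + 4)) := by
  have h₃ : i + 3 + 1 = i + 4 := by decide +revert
  have h₃' : i + 3 + 2 = i := by decide +revert
  have h₄ : i + 4 + 1 = i := by decide +revert
  have hthree := dist_pos_add_two hd (i + 3)
  have hfour := dist_pos_add_one hd (i + 4)
  rw [h₃, h₃'] at hthree
  rw [h₄] at hfour
  unfold C SC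
  rw [← Equiv.sum_comp (Equiv.addLeft i), Fin.sum_univ_five]
  simp only [Equiv.coe_addLeft, add_zero, dist_self, zero_add]
  rw [hthree, hfour, dist_comm _ (pos d i), dist_comm _ (pos d i), dist_pos_add_one hd,
    dist_pos_add_two hd]

lemma C_le (i : Fin 5) :
    C d i ≤ d i + (d i + d (i + 1)) + (d (i + 3) + d (i + 4)) + d (i + 4) := by
  rw [C_eq hd]
  gcongr <;> exact min_le_left _ _

lemma rotate_mem_stdSimplex (k : Fin 5) : (fun i => d (i + k)) ∈ stdSimplex ℝ (Fin 5) :=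
  ⟨fun _ => hd.1 _, (Equiv.sum_comp (Equiv.addRight k) d).trans hd.2⟩

lemma C_rotate (k i : Fin 5) : C (fun i => d (i + k)) i = C d (i + k) := by
  simp only [C_eq (rotate_mem_stdSimplex hd k), C_eq hd, add_right_comm _ _ k]

lemma PCD_rotate (k : Fin 5) : PCD (fun i => d (i + k)) = PCD d := by
  unfold PCD P
  rw [← Equiv.sum_comp (Equiv.addRight k) fun i => d (i + 2) * C d i]
  simp only [C_rotate hd, Equiv.coe_addRight, add_right_comm _ _ k]

lemma reflect_mem_stdSimplex : (fun i => d (4 - i)) ∈ stdSimplex ℝ (Fin 5) :=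
  ⟨fun _ => hd.1 _, (Equiv.sum_comp (Equiv.subLeft 4) d).trans hd.2⟩

lemma C_reflect (i : Fin 5) : C (fun i => d (4 - i)) i = C d (-i) := by
  have h₀ : 4 - i = -i + 4 := by decide +revert
  have h₁ : 4 - (i + 1) = -i + 3 := by decide +revert
  have h₃ : 4 - (i + 3) = -i + 1 := by decide +revert
  have h₄ : 4 - (i + 4) = -i := by decide +revert
  rw [C_eq (reflect_mem_stdSimplex hd), C_eq hd]
  simp only [h₀, h₁, h₃, h₄, add_comm (d (-i)), add_comm (d (-i + 3))]
  ring

lemma PCD_reflect : PCD (fun i => d (4 - i)) = PCD d := by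
  have hfacing (i : Fin 5) : 4 - (i + 2) = -i + 2 := by decide +revert
  unfold PCD P
  rw [← Equiv.sum_comp (Equiv.neg (Fin 5)) fun i => d (i + 2) * C d i]
  simp only [C_reflect hd, hfacing, Equiv.neg_apply]

end StdSimplex

section QuadraticBounds

lemma two_thirds_le_twelve_sub_eight_mul_sqrt_two : 2 / 3 ≤ 12 - 8 * √2 := by
  have hsqrt : √2 ≤ 17 / 12 := Real.sqrt_le_iff.2 (by norm_num)
  linarith

-- Clockwise from agent `0`, the gaps are `u, p, m, q, v`. Agent `0` then has cost `1 - m + u + v`,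
-- and the left-hand sides of the four `quadratic_bound` lemmas are the bound of `PCD_le`.
variable {u v p q m : ℝ}

-- For `v = 0`, the best constant in `4 u w ≤ ε (u + w) (2 u + w)` is `ε = 12 - 8√2`, attained at
-- `w = √2 u`; the approximation ratio is `7 - 4√2 = 1 + ε / 2`.
lemma four_mul_add_two_mul_le {w : ℝ} (hu : 0 ≤ u) (hv : 0 ≤ v) (hw : 0 ≤ w) :
    4 * u * w + 2 * u * v ≤ (12 - 8 * √2) * (u + v + w) * (2 * u + 2 * v + w) := by
  have hε := two_thirds_le_twelve_sub_eight_mul_sqrt_two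
  have hsq : √2 ^ 2 = 2 := Real.sq_sqrt zero_le_two
  have hremainder : 0 ≤ (12 - 8 * √2) * (√2 * u - w) ^ 2 + (4 * (12 - 8 * √2) - 2) * (u * v) +
      (12 - 8 * √2) * (2 * v ^ 2 + 3 * (v * w)) := by
    have hε₀ : 0 ≤ 12 - 8 * √2 := by linarith
    have hε₁ : 0 ≤ 4 * (12 - 8 * √2) - 2 := by linarith
    positivity
  linear_combination hremainder + ((12 - 8 * √2) * u ^ 2 + 16 * u * w) * hsq

lemma four_mul_add_two_mul_add_four_mul_le (hu : 0 ≤ u) (hv : 0 ≤ v) (hp : 0 ≤ p) (hq : 0 ≤ q) :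
    4 * u * q + 2 * u * v + 4 * p * v ≤
      (12 - 8 * √2) * (u + v + p + q) * (2 * u + 2 * v + p + q) := by
  rcases le_total v u with h | h
  · linarith [four_mul_add_two_mul_le hu hv (add_nonneg hp hq), mul_le_mul_of_nonneg_left h hp]
  · linarith [four_mul_add_two_mul_le hv hu (add_nonneg hp hq), mul_le_mul_of_nonneg_left h hq]

lemma quadratic_bound_of_half_le (hu : 0 ≤ u) (hv : 0 ≤ v) (hp : 0 ≤ p) (hq : 0 ≤ q)
    (hsum : u + p + m + q + v = 1) (hm : 1 / 2 ≤ m) :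
    (1 - m + u + v) + 4 * u * q + 2 * u * v + 4 * p * v ≤ (7 - 4 * √2) * (1 - m + u + v) := by
  have hquad := four_mul_add_two_mul_add_four_mul_le hu hv hp hq
  have hslack : 0 ≤ (12 - 8 * √2) * (2 * u + 2 * v + p + q) * (1 / 2 - (u + v + p + q)) := by
    have hε : 0 ≤ 12 - 8 * √2 := by linarith [two_thirds_le_twelve_sub_eight_mul_sqrt_two]
    have hhalf : 0 ≤ 1 / 2 - (u + v + p + q) := by linarith
    positivity
  obtain rfl : m = 1 - (u + v + p + q) := by linarith
  linear_combination hquad + hslack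

lemma quadratic_bound_of_half_le_add_of_half_le_add (hu : 0 ≤ u) (hv : 0 ≤ v)
    (hsum : u + p + m + q + v = 1) (hm : m ≤ 1 / 2) (hpm : 1 / 2 ≤ p + m) (hmq : 1 / 2 ≤ m + q) :
    (1 - m + u + v) + 4 * u * q + 2 * u * v + 4 * p * v - (u + v) * (1 - 2 * m) ≤
      (7 - 4 * √2) * (1 - m + u + v) := by
  -- The quadratic bound is applied to the excesses `p'` and `q'` of `p + m` and `m + q` over half
  -- a circle.
  obtain ⟨g, rfl⟩ : ∃ g, m = 1 / 2 - g := ⟨1 / 2 - m, by ring⟩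
  obtain ⟨p', rfl⟩ : ∃ p', p = p' + g := ⟨p - g, by ring⟩
  obtain ⟨q', rfl⟩ : ∃ q', q = q' + g := ⟨q - g, by ring⟩
  have hg : 0 ≤ g := by linarith
  have hp' : 0 ≤ p' := by linarith
  have hq' : 0 ≤ q' := by linarith
  have hquad := four_mul_add_two_mul_add_four_mul_le hu hv hp' hq'
  have hslack : 0 ≤ (2 * (12 - 8 * √2) - 1) * (2 * g * (u + v)) +
      (12 - 8 * √2) * (3 * g * (p' + q') + 2 * g ^ 2) := by
    have hε := two_thirds_le_twelve_sub_eight_mul_sqrt_two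
    have hε₀ : 0 ≤ 12 - 8 * √2 := by linarith
    have hε₁ : 0 ≤ 2 * (12 - 8 * √2) - 1 := by linarith
    positivity
  obtain rfl : g = 1 / 2 - (u + v + p' + q') := by linarith
  linear_combination hquad + hslack

lemma quadratic_bound_of_add_le_half_of_half_le_add (hu : 0 ≤ u) (hv : 0 ≤ v) (hp : 0 ≤ p)
    (hsum : u + p + m + q + v = 1) (hpm : p + m ≤ 1 / 2) (hmq : 1 / 2 ≤ m + q) :
    (1 - m + u + v) + 4 * u * q + 2 * u * v + 4 * p * v - (u + v) * (1 - 2 * m) -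
      (u + q) * (1 - 2 * (p + m)) ≤ (7 - 4 * √2) * (1 - m + u + v) := by
  obtain ⟨t, rfl⟩ : ∃ t, m = 1 / 2 - p - t := ⟨1 / 2 - p - m, by ring⟩
  obtain ⟨q', rfl⟩ : ∃ q', q = q' + p + t := ⟨q - p - t, by ring⟩
  have ht : 0 ≤ t := by linarith
  have hq' : 0 ≤ q' := by linarith
  have hquad := four_mul_add_two_mul_add_four_mul_le hu hv le_rfl hq'
  have hslack : 0 ≤ (3 * (12 - 8 * √2) - 2) * (p * (u + v)) +
      (12 - 8 * √2) * (3 * p * q' + p * (u + v) + 2 * p ^ 2 + p * t + (u + v + q') * t) +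
      (2 * t * v + 2 * t * q' + 2 * t ^ 2 + 2 * p * t) := by
    have hε := two_thirds_le_twelve_sub_eight_mul_sqrt_two
    have hε₀ : 0 ≤ 12 - 8 * √2 := by linarith
    have hε₁ : 0 ≤ 3 * (12 - 8 * √2) - 2 := by linarith
    positivity
  obtain rfl : p = 1 / 2 - (u + v + q') := by linarith
  linear_combination hquad + hslack

lemma quadratic_bound_of_add_le_half_of_add_le_half
    (hsum : u + p + m + q + v = 1) (hpm : p + m ≤ 1 / 2) (hmq : m + q ≤ 1 / 2) :
    (1 - m + u + v) + 4 * u * q + 2 * u * v + 4 * p * v - (u + v) * (1 - 2 * m) -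
      (u + q) * (1 - 2 * (p + m)) - (p + v) * (1 - 2 * (m + q)) ≤
      (7 - 4 * √2) * (1 - m + u + v) := by
  have hε := two_thirds_le_twelve_sub_eight_mul_sqrt_two
  calc
    _ ≤ 6 / 5 * (u + p + m + q + v) ^ 2 := by
      linear_combination (sq_nonneg (2 * u - m - q) + sq_nonneg (2 * p - q - v) +
        sq_nonneg (2 * m - v - u) + sq_nonneg (2 * q - u - p) +
        sq_nonneg (2 * v - p - m)) / 5 - hsum
    _ = 6 / 5 := by rw [hsum]; norm_num
    _ ≤ 7 - 4 * √2 := by linarith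
    _ ≤ (7 - 4 * √2) * (1 - m + u + v) :=
      le_mul_of_one_le_right (by linarith) (by linarith)

end QuadraticBounds

/-- Agent `k` is *balanced* if the arc to its second clockwise successor and the arc from its second
predecessor are both at most half a circle, so that `k` is a median of the agents. Comparing `PCD`
with the cost of a balanced agent leaves a single explicit formula for that cost. -/
def IsBalanced (d : Fin 5 → ℝ) (k : Fin 5) : Prop :=
  d k + d (k + 1) ≤ 1 / 2 ∧ d (k + 3) + d (k + 4) ≤ 1 / 2

lemma isBalanced_rotate {d : Fin 5 → ℝ} {k i : Fin 5} :
    IsBalanced (fun i => d (i + k)) i ↔ IsBalanced d (i + k) := by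
  simp only [IsBalanced, add_right_comm _ _ k]

lemma isBalanced_reflect {d : Fin 5 → ℝ} {i : Fin 5} :
    IsBalanced (fun i => d (4 - i)) i ↔ IsBalanced d (-i) := by
  have h₀ : 4 - i = -i + 4 := by decide +revert
  have h₁ : 4 - (i + 1) = -i + 3 := by decide +revert
  have h₃ : 4 - (i + 3) = -i + 1 := by decide +revert
  have h₄ : 4 - (i + 4) = -i := by decide +revert
  simp only [IsBalanced, h₀, h₁, h₃, h₄, add_comm (d (-i)), add_comm (d (-i + 3))]
  exact and_comm

section Balanced

variable {d : Fin 5 → ℝ} (hd : d ∈ stdSimplex ℝ (Fin 5))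
include hd

lemma exists_isBalanced_C_le_C_zero_of_half_le (h : 1 / 2 ≤ d 3 + d 4) :
    ∃ j, IsBalanced d j ∧ C d j ≤ C d 0 := by
  have hsum := sum_gaps_eq_one hd
  have h₀ := hd.1 0
  have h₁ := hd.1 1
  have h₂ := hd.1 2
  have hC₀ : C d 0 = d 0 + (d 0 + d 1) + (d 0 + d 1 + d 2) + min (d 4) (1 - d 4) := by
    rw [C_eq hd]
    simp only [zero_add]
    rw [min_eq_left (by linarith), min_eq_left (by linarith), min_eq_right (by linarith)]
    linarith
  rcases le_total (d 4 + d 0) (1 / 2) with h₄₀ | h₄₀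
  · refine ⟨1, ⟨?_, h₄₀⟩, ?_⟩
    · exact show d 1 + d 2 ≤ 1 / 2 by linarith
    have hC₁ : C d 1 ≤ d 1 + (d 1 + d 2) + (d 4 + d 0) + d 0 := C_le hd 1
    rw [min_eq_left (by linarith)] at hC₀
    linarith
  · have hs₂ : d 2 + d 3 ≤ 1 / 2 := by linarith
    refine ⟨2, ⟨hs₂, ?_⟩, ?_⟩
    · exact show d 0 + d 1 ≤ 1 / 2 by linarith
    have hC₂ : C d 2 ≤ d 2 + (d 2 + d 3) + (d 0 + d 1) + d 1 := C_le hd 2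
    have hs₂' : d 2 + d 3 ≤ 2 * d 0 + min (d 4) (1 - d 4) := by
      rcases min_choice (d 4) (1 - d 4) with h₄ | h₄ <;> linarith
    linarith

lemma exists_isBalanced_C_le_C_zero : ∃ j, IsBalanced d j ∧ C d j ≤ C d 0 := by
  rcases le_total (1 / 2) (d 3 + d 4) with h₃₄ | h₃₄
  · exact exists_isBalanced_C_le_C_zero_of_half_le hd h₃₄
  rcases le_total (1 / 2) (d 0 + d 1) with h₀₁ | h₀₁
  · obtain ⟨j, hj, hC⟩ := exists_isBalanced_C_le_C_zero_of_half_le (reflect_mem_stdSimplex hd)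
      (h₀₁.trans_eq (add_comm _ _))
    rw [C_reflect hd, C_reflect hd] at hC
    exact ⟨-j, isBalanced_reflect.1 hj, hC⟩
  · exact ⟨0, ⟨h₀₁, h₃₄⟩, le_rfl⟩

lemma exists_isBalanced_C_le (k : Fin 5) : ∃ j, IsBalanced d j ∧ C d j ≤ C d k := by
  obtain ⟨j, hj, hC⟩ := exists_isBalanced_C_le_C_zero (rotate_mem_stdSimplex hd k)
  rw [C_rotate hd, C_rotate hd, zero_add] at hC
  exact ⟨j + k, isBalanced_rotate.1 hj, hC⟩

lemma C_zero_eq_of_isBalanced (h : IsBalanced d 0) : C d 0 = 1 - d 2 + d 0 + d 4 := by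
  have hsum := sum_gaps_eq_one hd
  have h₁ := hd.1 1
  have h₃ := hd.1 3
  obtain ⟨h₀₁, h₃₄⟩ : d 0 + d 1 ≤ 1 / 2 ∧ d 3 + d 4 ≤ 1 / 2 := h
  rw [C_eq hd]
  simp only [zero_add]
  rw [min_eq_left (by linarith), min_eq_left (by linarith), min_eq_left (by linarith),
    min_eq_left (by linarith)]
  linarith

lemma PCD_eq_sum_pairs :
    PCD d = ∑ i, ((d (i + 2) + d (i + 3)) * min (d i) (1 - d i) +
      (d (i + 2) + d (i + 4)) * min (d i + d (i + 1)) (1 - (d i + d (i + 1)))) := by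
  simp only [PCD, P, C_eq hd, Fin.sum_univ_five, Fin.isValue, Fin.reduceAdd, zero_add]
  ring

-- The polynomial measures every distance along the path avoiding the arc `d 2` facing agent `0`;
-- the `max` terms are the savings of the pairs for which crossing that arc is shorter.
lemma PCD_le :
    PCD d ≤ (1 - d 2 + d 0 + d 4) + 4 * d 0 * d 3 + 2 * d 0 * d 4 + 4 * d 1 * d 4 -
      (d 0 + d 4) * max 0 (1 - 2 * d 2) - (d 0 + d 3) * max 0 (1 - 2 * (d 1 + d 2)) -
      (d 1 + d 4) * max 0 (1 - 2 * (d 2 + d 3)) := by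
  have hsum := sum_gaps_eq_one hd
  have hmin (x : ℝ) : min x (1 - x) = 1 - x - max 0 (1 - 2 * x) := by
    rw [sub_eq_add_neg _ (max _ _), ← min_neg_neg, ← min_add_add_left, min_comm]
    congr 1 <;> ring
  have hle (i j : Fin 5) (x : ℝ) : (d i + d j) * min x (1 - x) ≤ (d i + d j) * x :=
    mul_le_mul_of_nonneg_left (min_le_left _ _) (add_nonneg (hd.1 i) (hd.1 j))
  rw [PCD_eq_sum_pairs hd, Fin.sum_univ_five]
  simp only [Fin.isValue, Fin.reduceAdd, zero_add]
  rw [hmin (d 2), hmin (d 1 + d 2), hmin (d 2 + d 3)]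
  linear_combination hle 2 3 (d 0) + hle 3 4 (d 1) + hle 0 1 (d 3) + hle 1 2 (d 4) +
    hle 2 4 (d 0 + d 1) + hle 0 2 (d 3 + d 4) + hle 1 3 (d 4 + d 0) + hsum

lemma PCD_le_mul_C_zero_of_add_le_half (h : IsBalanced d 0) (h₁₂ : d 1 + d 2 ≤ 1 / 2) :
    PCD d ≤ (7 - 4 * √2) * C d 0 := by
  have hsum := sum_gaps_eq_one hd
  have h₂ : d 2 ≤ 1 / 2 := by linarith [hd.1 1]
  rw [C_zero_eq_of_isBalanced hd h]
  refine (PCD_le hd).trans ?_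
  rw [max_eq_right (by linarith), max_eq_right (by linarith)]
  rcases le_total (1 / 2) (d 2 + d 3) with h₂₃ | h₂₃
  · rw [max_eq_left (by linarith), mul_zero, sub_zero]
    exact quadratic_bound_of_add_le_half_of_half_le_add (hd.1 0) (hd.1 4) (hd.1 1) hsum h₁₂ h₂₃
  · rw [max_eq_right (by linarith)]
    exact quadratic_bound_of_add_le_half_of_add_le_half hsum h₁₂ h₂₃

lemma PCD_le_mul_C_zero (h : IsBalanced d 0) : PCD d ≤ (7 - 4 * √2) * C d 0 := by
  have hsum := sum_gaps_eq_one hd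
  rcases le_total (d 1 + d 2) (1 / 2) with h₁₂ | h₁₂
  · exact PCD_le_mul_C_zero_of_add_le_half hd h h₁₂
  rcases le_total (d 2 + d 3) (1 / 2) with h₂₃ | h₂₃
  · have hreflect := PCD_le_mul_C_zero_of_add_le_half (reflect_mem_stdSimplex hd)
      (isBalanced_reflect.2 h) ((add_comm _ _).trans_le h₂₃)
    rwa [PCD_reflect hd, C_reflect hd, neg_zero] at hreflect
  rw [C_zero_eq_of_isBalanced hd h]
  refine (PCD_le hd).trans ?_
  rw [max_eq_left (a := 0) (b := 1 - 2 * (d 1 + d 2)) (by linarith),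
    max_eq_left (a := 0) (b := 1 - 2 * (d 2 + d 3)) (by linarith)]
  simp only [mul_zero, sub_zero]
  rcases le_total (1 / 2) (d 2) with h₂ | h₂
  · rw [max_eq_left (by linarith), mul_zero, sub_zero]
    exact quadratic_bound_of_half_le (hd.1 0) (hd.1 4) (hd.1 1) (hd.1 3) hsum h₂
  · rw [max_eq_right (by linarith)]
    exact quadratic_bound_of_half_le_add_of_half_le_add (hd.1 0) (hd.1 4) hsum h₂ h₁₂ h₂₃

lemma PCD_le_mul_C_of_isBalanced {k : Fin 5} (h : IsBalanced d k) :
    PCD d ≤ (7 - 4 * √2) * C d k := by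
  rw [← zero_add k] at h ⊢
  rw [← PCD_rotate hd k, ← C_rotate hd k 0]
  exact PCD_le_mul_C_zero (rotate_mem_stdSimplex hd k) (isBalanced_rotate.2 h)

end Balanced

theorem pcd_five_agents_approx (d : Fin 5 → ℝ) (hd : ∀ i, 0 ≤ d i)
    (hsum : ∑ i, d i = 1) :
    PCD d ≤ (7 - 4 * Real.sqrt 2) * OPT d := by
  obtain ⟨k, hk⟩ := exists_C_le_OPT d
  obtain ⟨j, hj, hjk⟩ := exists_isBalanced_C_le ⟨hd, hsum⟩ k
  have hκ : 0 ≤ 7 - 4 * √2 := by linarith [two_thirds_le_twelve_sub_eight_mul_sqrt_two]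
  calc PCD d ≤ (7 - 4 * √2) * C d j := PCD_le_mul_C_of_isBalanced ⟨hd, hsum⟩ hj
    _ ≤ (7 - 4 * √2) * OPT d := mul_le_mul_of_nonneg_left (hjk.trans hk) hκ
end

section
/- First-order condition at an optimum: let x : Fin n → AddCircle (1 : ℝ) be agent locations and let a be an optimal location (∀ b, ∑ j, dist(x j, a) ≤ ∑ j, dist(x j, b)). Define the cardinalities R = |{j : r(x j − a) ∈ (0, 1/2)}|, L = |{j : r(x j − a) ∈ (1/2, 1)}|, A = |{j : r(x j − a) = 1/2}|, B = |{j : x j = a}|. Then R − L + B − A ≥ 0 and L − R + B − A ≥ 0; in particular |L − R| ≤ B − A (as integers). -/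
instance : Fact ((0 : ℝ) < 1) := ⟨zero_lt_one⟩

/-- The canonical representative in `[0, 1)` of a point on the unit circle. -/
noncomputable def rep (y : AddCircle (1 : ℝ)) : ℝ :=
  ((AddCircle.equivIco 1 0) y : ℝ)

/-!
Moving the facility clockwise by a small `t > 0` takes it closer by `t` to the agents at clockwise
offset in `(0, p / 2]` and further by `t` from all the others, so at a local optimum the former
cannot outnumber the latter. The antipodal agents are among the former and the agents at the
facility among the latter, whence `R + A ≤ L + B`. Reflecting the circle exchanges `L` and `R` and
fixes `A` and `B`, so also `L + A ≤ R + B`.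
-/

open Set

/-- The canonical representative in `[0, p)` of a point on the circle of circumference `p`, so that
`icoRep p (y - a)` is the clockwise offset of `y` from `a`. For `p = 1` this is `rep`. -/
noncomputable def icoRep (p : ℝ) [Fact (0 < p)] (y : AddCircle p) : ℝ :=
  AddCircle.equivIco p 0 y

/-- The social cost of a facility at `b`: the sum of its distances to the agents, who are located
at the points `x j`. -/
noncomputable def socialCost {ι M : Type*} [Fintype ι] [Dist M] (x : ι → M) (b : M) : ℝ :=
  ∑ j, dist (x j) b

section Representative

variable {p : ℝ} [Fact (0 < p)] {y : AddCircle p}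

theorem coe_icoRep (y : AddCircle p) : (icoRep p y : AddCircle p) = y :=
  AddCircle.coe_equivIco

theorem icoRep_mem_Ico (y : AddCircle p) : icoRep p y ∈ Ico 0 p := by
  simpa only [zero_add, icoRep] using (AddCircle.equivIco p 0 y).2

theorem icoRep_coe_of_mem_Ico {u : ℝ} (hu : u ∈ Ico 0 p) : icoRep p (u : AddCircle p) = u :=
  AddCircle.equivIco_coe_of_mem (by rwa [zero_add])

theorem icoRep_zero : icoRep p 0 = 0 :=
  icoRep_coe_of_mem_Ico ⟨le_rfl, Fact.out⟩

theorem icoRep_eq_zero_iff : icoRep p y = 0 ↔ y = 0 := by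
  refine ⟨fun h => ?_, fun h => h ▸ icoRep_zero⟩
  rw [← coe_icoRep y, h, AddCircle.coe_zero]

theorem icoRep_neg (hy : y ≠ 0) : icoRep p (-y) = p - icoRep p y := by
  obtain ⟨hnonneg, hlt⟩ := icoRep_mem_Ico y
  have hpos : 0 < icoRep p y := hnonneg.lt_of_ne' (mt icoRep_eq_zero_iff.mp hy)
  have hcoe : ((p - icoRep p y : ℝ) : AddCircle p) = -y := by
    rw [AddCircle.coe_sub, AddCircle.coe_period, zero_sub, coe_icoRep]
  rw [← hcoe, icoRep_coe_of_mem_Ico ⟨by linarith, by linarith⟩]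

theorem icoRep_neg_eq_half_iff : icoRep p (-y) = p / 2 ↔ icoRep p y = p / 2 := by
  rcases eq_or_ne y 0 with rfl | hy
  · rw [neg_zero]
  · rw [icoRep_neg hy]
    constructor <;> intro h <;> linarith

theorem icoRep_neg_mem_Ioo_iff : icoRep p (-y) ∈ Ioo 0 (p / 2) ↔ icoRep p y ∈ Ioo (p / 2) p := by
  have hp : 0 < p := Fact.out
  rcases eq_or_ne y 0 with rfl | hy
  · rw [neg_zero, icoRep_zero]
    exact iff_of_false (fun h => h.1.false) (fun h => by linarith [h.1])
  · rw [icoRep_neg hy, mem_Ioo, mem_Ioo]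
    constructor <;> rintro ⟨_, _⟩ <;> constructor <;> linarith

theorem icoRep_notMem_Ioc_iff :
    icoRep p y ∉ Ioc 0 (p / 2) ↔ icoRep p y ∈ Ioo (p / 2) p ∨ y = 0 := by
  obtain ⟨hnonneg, hlt⟩ := icoRep_mem_Ico y
  rw [← icoRep_eq_zero_iff, mem_Ioc, mem_Ioo, not_and_or, not_lt, not_le]
  constructor
  · rintro (hle | hgt)
    · exact Or.inr (hle.antisymm hnonneg)
    · exact Or.inl ⟨hgt, hlt⟩
  · rintro (⟨hgt, -⟩ | hzero)
    · exact Or.inr hgt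
    · exact Or.inl hzero.le

theorem icoRep_neg_mem_Ico_of_notMem_Ioc (hy : icoRep p y ∉ Ioc 0 (p / 2)) :
    icoRep p (-y) ∈ Ico 0 (p / 2) := by
  rcases icoRep_notMem_Ioc_iff.mp hy with hmem | rfl
  · exact Ioo_subset_Ico_self (icoRep_neg_mem_Ioo_iff.mpr hmem)
  · rw [neg_zero, icoRep_zero]
    exact ⟨le_rfl, half_pos Fact.out⟩

end Representative

section Slope

variable {p : ℝ}

theorem norm_coe_eq_of_mem_Icc_zero_half {u : ℝ} (hu : u ∈ Icc 0 (p / 2)) :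
    ‖(u : AddCircle p)‖ = u := by
  have habs : |u| = u := abs_of_nonneg hu.1
  have hle : |u| ≤ |p| / 2 := by linarith [hu.2, le_abs_self p]
  rcases eq_or_ne p 0 with rfl | hp
  · rw [AddCircle.norm_eq_of_zero, habs]
  · rw [(AddCircle.norm_coe_eq_abs_iff p hp).mpr hle, habs]

theorem hasDerivWithinAt_norm_coe_sub {u : ℝ} (hu : u ∈ Ioc 0 (p / 2)) :
    HasDerivWithinAt (fun t : ℝ => ‖((u - t : ℝ) : AddCircle p)‖) (-1) (Ici 0) 0 := by
  have hnorm : ∀ t ∈ Ico 0 u, ‖((u - t : ℝ) : AddCircle p)‖ = u - t := by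
    rintro t ⟨ht, htu⟩
    exact norm_coe_eq_of_mem_Icc_zero_half ⟨by linarith, by linarith [hu.2]⟩
  refine ((hasDerivAt_id (0 : ℝ)).const_sub u).hasDerivWithinAt.congr_of_eventuallyEq ?_
    (hnorm 0 ⟨le_rfl, hu.1⟩)
  filter_upwards [Ico_mem_nhdsGE hu.1] with t ht using hnorm t ht

theorem hasDerivWithinAt_norm_coe_add {u : ℝ} (hu : u ∈ Ico 0 (p / 2)) :
    HasDerivWithinAt (fun t : ℝ => ‖((u + t : ℝ) : AddCircle p)‖) 1 (Ici 0) 0 := by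
  have hgap : 0 < p / 2 - u := sub_pos.mpr hu.2
  have hnorm : ∀ t ∈ Ico 0 (p / 2 - u), ‖((u + t : ℝ) : AddCircle p)‖ = u + t := by
    rintro t ⟨ht, htu⟩
    exact norm_coe_eq_of_mem_Icc_zero_half ⟨by linarith [hu.1], by linarith⟩
  refine ((hasDerivAt_id (0 : ℝ)).const_add u).hasDerivWithinAt.congr_of_eventuallyEq ?_
    (hnorm 0 ⟨le_rfl, hgap⟩)
  filter_upwards [Ico_mem_nhdsGE hgap] with t ht using hnorm t ht

open Classical in
theorem hasDerivWithinAt_norm_sub_coe [Fact (0 < p)] (y : AddCircle p) :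
    HasDerivWithinAt (fun t : ℝ => ‖y - (t : AddCircle p)‖)
      (if icoRep p y ∈ Ioc 0 (p / 2) then -1 else 1) (Ici 0) 0 := by
  split_ifs with hy
  · simpa only [AddCircle.coe_sub, coe_icoRep] using hasDerivWithinAt_norm_coe_sub hy
  · have hnorm (t : ℝ) :
        ‖y - (t : AddCircle p)‖ = ‖((icoRep p (-y) + t : ℝ) : AddCircle p)‖ := by
      rw [AddCircle.coe_add, coe_icoRep, norm_sub_rev, sub_eq_neg_add]
    simpa only [hnorm] using
      hasDerivWithinAt_norm_coe_add (icoRep_neg_mem_Ico_of_notMem_Ioc hy)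

end Slope

theorem hasDerivWithinAt_Ici_nonneg_of_isLocalMinOn {f : ℝ → ℝ} {f' a : ℝ}
    (hmin : IsLocalMinOn f (Ici a) a) (hf : HasDerivWithinAt f f' (Ici a) a) : 0 ≤ f' := by
  have hdir : (1 : ℝ) ∈ posTangentConeAt (Ici a) a := by
    refine mem_posTangentConeAt_of_segment_subset ?_
    rw [segment_eq_Icc (by linarith)]
    exact Icc_subset_Ici_self
  simpa using hmin.hasFDerivWithinAt_nonneg hf.hasFDerivWithinAt hdir

theorem sum_ite_neg_one_one {ι : Type*} [Fintype ι] (P : ι → Prop) [DecidablePred P] :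
    ∑ j, (if P j then -1 else 1 : ℝ) = {j | ¬P j}.ncard - {j | P j}.ncard := by
  simp only [Finset.sum_ite, Finset.sum_const, nsmul_eq_mul, ncard_eq_toFinset_card',
    toFinset_ofPred]
  ring

section SocialCost

variable {ι : Type*} [Fintype ι]

section Reflection

variable {G : Type*} [SeminormedAddCommGroup G] {x : ι → G} {a : G}

theorem socialCost_neg (x : ι → G) (b : G) : socialCost (-x) b = socialCost x (-b) := by
  simp only [socialCost, Pi.neg_apply, ← dist_neg_neg (x _) (-b), neg_neg]

theorem isLocalMin_socialCost_neg (hmin : IsLocalMin (socialCost x) a) :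
    IsLocalMin (socialCost (-x)) (-a) := by
  simp only [funext (socialCost_neg x)]
  refine IsLocalMin.comp_continuous (f := socialCost x) ?_ continuous_neg.continuousAt
  rwa [neg_neg]

end Reflection

variable {p : ℝ} [Fact (0 < p)] {x : ι → AddCircle p} {a : AddCircle p}

theorem hasDerivWithinAt_socialCost (x : ι → AddCircle p) (a : AddCircle p) :
    HasDerivWithinAt (fun t : ℝ => socialCost x (a + t))
      ({j | icoRep p (x j - a) ∉ Ioc 0 (p / 2)}.ncard -
        {j | icoRep p (x j - a) ∈ Ioc 0 (p / 2)}.ncard) (Ici 0) 0 := by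
  classical
  simp only [socialCost, dist_eq_norm, ← sub_sub, ← sum_ite_neg_one_one]
  exact HasDerivWithinAt.fun_sum fun j _ => hasDerivWithinAt_norm_sub_coe (x j - a)

theorem ncard_mem_Ioc_le_ncard_notMem_Ioc (hmin : IsLocalMin (socialCost x) a) :
    {j | icoRep p (x j - a) ∈ Ioc 0 (p / 2)}.ncard ≤
      {j | icoRep p (x j - a) ∉ Ioc 0 (p / 2)}.ncard := by
  have hcont : ContinuousAt (fun t : ℝ => a + (t : AddCircle p)) 0 := by fun_prop
  have hline : IsLocalMin (fun t : ℝ => socialCost x (a + t)) 0 :=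
    IsLocalMin.comp_continuous (f := socialCost x) (by rwa [AddCircle.coe_zero, add_zero]) hcont
  have hslope := hasDerivWithinAt_Ici_nonneg_of_isLocalMinOn (hline.on _)
    (hasDerivWithinAt_socialCost x a)
  exact_mod_cast sub_nonneg.mp hslope

theorem ncard_clockwise_add_antipodal_le (hmin : IsLocalMin (socialCost x) a) :
    {j | icoRep p (x j - a) ∈ Ioo 0 (p / 2)}.ncard + {j | icoRep p (x j - a) = p / 2}.ncard ≤
      {j | icoRep p (x j - a) ∈ Ioo (p / 2) p}.ncard + {j | x j = a}.ncard := by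
  have hp : 0 < p := Fact.out
  have hnear : {j | icoRep p (x j - a) ∈ Ioc 0 (p / 2)} =
      {j | icoRep p (x j - a) ∈ Ioo 0 (p / 2)} ∪ {j | icoRep p (x j - a) = p / 2} := by
    simp only [← Ioo_union_right (half_pos hp), mem_union, mem_singleton_iff, ofPred_or]
  have hfar : {j | icoRep p (x j - a) ∉ Ioc 0 (p / 2)} =
      {j | icoRep p (x j - a) ∈ Ioo (p / 2) p} ∪ {j | x j = a} := by
    simp only [icoRep_notMem_Ioc_iff, sub_eq_zero, ofPred_or]
  have hdisj : Disjoint {j | icoRep p (x j - a) ∈ Ioo 0 (p / 2)}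
      {j | icoRep p (x j - a) = p / 2} :=
    disjoint_left.mpr fun j hj hj' => hj.2.ne hj'
  calc _ = {j | icoRep p (x j - a) ∈ Ioc 0 (p / 2)}.ncard := by rw [hnear, ncard_union_eq hdisj]
    _ ≤ {j | icoRep p (x j - a) ∉ Ioc 0 (p / 2)}.ncard := ncard_mem_Ioc_le_ncard_notMem_Ioc hmin
    _ ≤ _ := hfar ▸ ncard_union_le _ _

theorem ncard_counterclockwise_add_antipodal_le (hmin : IsLocalMin (socialCost x) a) :
    {j | icoRep p (x j - a) ∈ Ioo (p / 2) p}.ncard + {j | icoRep p (x j - a) = p / 2}.ncard ≤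
      {j | icoRep p (x j - a) ∈ Ioo 0 (p / 2)}.ncard + {j | x j = a}.ncard := by
  have hmirror (j : ι) : icoRep p (x j - a) ∈ Ioo 0 (p / 2) ↔
      icoRep p (-(x j - a)) ∈ Ioo (p / 2) p := by
    rw [← icoRep_neg_mem_Ioo_iff, neg_neg]
  simpa only [Pi.neg_apply, ← neg_sub', icoRep_neg_mem_Ioo_iff, icoRep_neg_eq_half_iff, ← hmirror,
    neg_inj] using ncard_clockwise_add_antipodal_le (isLocalMin_socialCost_neg hmin)

theorem first_order_condition_at_optimum_general (hmin : IsLocalMin (socialCost x) a) :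
    |({j | icoRep p (x j - a) ∈ Ioo (p / 2) p}.ncard : ℤ) -
        {j | icoRep p (x j - a) ∈ Ioo 0 (p / 2)}.ncard| ≤
      {j | x j = a}.ncard - {j | icoRep p (x j - a) = p / 2}.ncard := by
  have hclockwise := ncard_clockwise_add_antipodal_le hmin
  have hcounterclockwise := ncard_counterclockwise_add_antipodal_le hmin
  rw [abs_le]
  constructor <;> lia

end SocialCost

theorem first_order_condition_at_optimum (n : ℕ)
    (x : Fin n → AddCircle (1 : ℝ)) (a : AddCircle (1 : ℝ))
    (hopt : ∀ b : AddCircle (1 : ℝ), ∑ j, dist (x j) a ≤ ∑ j, dist (x j) b)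
    (R L A B : ℤ)
    (hR : R = ({j | rep (x j - a) ∈ Set.Ioo (0 : ℝ) (1 / 2)} : Set (Fin n)).ncard)
    (hL : L = ({j | rep (x j - a) ∈ Set.Ioo (1 / 2 : ℝ) 1} : Set (Fin n)).ncard)
    (hA : A = ({j | rep (x j - a) = 1 / 2} : Set (Fin n)).ncard)
    (hB : B = ({j | x j = a} : Set (Fin n)).ncard) :
    0 ≤ R - L + B - A ∧ 0 ≤ L - R + B - A ∧ |L - R| ≤ B - A := by
  have habs : |L - R| ≤ B - A := by
    subst hR hL hA hB
    exact first_order_condition_at_optimum_general (Filter.Eventually.of_forall hopt)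
  exact ⟨by linarith [abs_le.mp habs], by linarith [abs_le.mp habs], habs⟩
end
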